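/- Let (a_1, b_1), ..., (a_k, b_k) be pairwise linearly independent vectors in ℝ², let s ≥ 0 be an integer, and suppose a function f ∈ C^s(ℝ²) has the form f(x, y) = ∑_{i=1}^k f_i(a_i x + b_i y), where f_1, ..., f_k : ℝ → ℝ are arbitrary univariate functions. Then there exist functions g_1, ..., g_k ∈ C^s(ℝ) such that f(x, y) = ∑_{i=1}^k g_i(a_i x + b_i y) for all (x, y) ∈ ℝ². -/

import Mathlib

/-!
Without any restriction on the profiles `g i`, a function is a sum `∑ i, g i ∘ φ i` if and only if
it is annihilated by every finite combination of point masses whose push-forwards under all `φ i`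
vanish. Hence these sums are stable under pointwise limits and under integration. If
`φ i v = φ i w`, then `x ↦ f (x + v) - f (x + w)` is a sum without the `i`-th direction, and so, in
the limit, is the derivative of `f` along the line `ker (φ i)`. For `f` of class `C^(n+1)`,
induction on the number of directions makes this derivative a sum of `C^n` ridge functions;
integrating their profiles and subtracting leaves a function constant along `ker (φ i)`, which is a
`C^(n+1)` ridge function. For `f` merely continuous, two averages of differences of translates,
each missing one direction, reduce `f` to a mollification of itself.
-/

open MeasureTheory Module
open scoped ContDiff Topology

section LinearMap

theorem exists_linearMap_comp_eq_of_ker_le {K V W E : Type*} [DivisionRing K] [AddCommGroup V]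
    [Module K V] [AddCommGroup W] [Module K W] [AddCommGroup E] [Module K E] {S : V →ₗ[K] W}
    {L : V →ₗ[K] E} (h : S.ker ≤ L.ker) : ∃ G : W →ₗ[K] E, G ∘ₗ S = L := by
  obtain ⟨r, hr⟩ := (S.ker.liftQ S le_rfl).exists_leftInverse_of_injective
    (Submodule.ker_liftQ_eq_bot _ _ _ le_rfl)
  refine ⟨S.ker.liftQ L h ∘ₗ r, LinearMap.ext fun v => ?_⟩
  exact congrArg (S.ker.liftQ L h) (LinearMap.congr_fun hr (S.ker.mkQ v))

theorem exists_apply_eq_zero_and_apply_eq_one {K V W : Type*} [DivisionRing K] [AddCommGroup V]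
    [Module K V] [AddCommGroup W] [Module K W] {φ : V →ₗ[K] W} {ψ : V →ₗ[K] K}
    (h : ¬ φ.ker ≤ ψ.ker) : ∃ u, φ u = 0 ∧ ψ u = 1 := by
  obtain ⟨u, hφu, hψu⟩ := SetLike.not_le_iff_exists.1 h
  rw [LinearMap.mem_ker] at hφu hψu
  exact ⟨(ψ u)⁻¹ • u, by simp [hφu], by simp [hψu]⟩

theorem exists_ker_eq_span_singleton {K V : Type*} [Field K] [AddCommGroup V] [Module K V]
    [FiniteDimensional K V] {φ : Dual K V} (hV : finrank K V ≤ 2) (hφ : φ ≠ 0) :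
    ∃ v, φ.ker = Submodule.span K {v} := by
  have h_rank : finrank K φ.ker ≤ 1 := by
    have := Dual.finrank_ker_add_one_of_ne_zero hφ
    lia
  exact ((Submodule.finrank_le_one_iff_isPrincipal _).1 h_rank).principal

end LinearMap

section SumComp

variable {𝕜 ι X Y E : Type*} [Semiring 𝕜] [AddCommMonoid E] [Module 𝕜 E]
  {P Q : Submodule 𝕜 (Y → E)} {φ : ι → X → Y} {s t : Finset ι} {f : X → E}

/-- The functions `∑ i ∈ s, g i ∘ φ i` with all `g i ∈ P`. The submodule `P` is the regularity
imposed on the profiles `g i`: `P = ⊤` leaves them arbitrary. -/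
def sumComp (P : Submodule 𝕜 (Y → E)) (φ : ι → X → Y) (s : Finset ι) : Submodule 𝕜 (X → E) :=
  ⨆ i ∈ s, P.map (LinearMap.funLeft 𝕜 E (φ i))

theorem sumComp_mono (hPQ : P ≤ Q) (hst : s ⊆ t) : sumComp P φ s ≤ sumComp Q φ t :=
  (iSup₂_mono fun _ _ => Submodule.map_mono hPQ).trans (biSup_mono fun _ hi => hst hi)

theorem comp_mem_sumComp {i : ι} (hi : i ∈ s) {g : Y → E} (hg : g ∈ P) :
    g ∘ φ i ∈ sumComp P φ s :=
  le_iSup₂ (f := fun i _ => P.map (LinearMap.funLeft 𝕜 E (φ i))) i hi ⟨g, hg, rfl⟩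

theorem mem_sumComp_iff :
    f ∈ sumComp P φ s ↔ ∃ g : ι → Y → E, (∀ i, g i ∈ P) ∧ f = ∑ i ∈ s, g i ∘ φ i := by
  refine ⟨fun hf => ?_, ?_⟩
  · obtain ⟨μ, rfl⟩ := (Submodule.mem_iSup_finset_iff_exists_sum _ f).1 hf
    choose g hgP hg using fun i => (μ i).2
    exact ⟨g, hgP, Finset.sum_congr rfl fun i _ => (hg i).symm⟩
  · rintro ⟨g, hgP, rfl⟩
    exact Submodule.sum_mem _ fun i hi => comp_mem_sumComp hi (hgP i)

theorem sumComp_top_le_erase_of_comp_eq [DecidableEq ι] {i j : ι} (hj : j ∈ s.erase i) {η : Y → Y}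
    (hη : φ i = η ∘ φ j) :
    sumComp (⊤ : Submodule 𝕜 (Y → E)) φ s ≤ sumComp ⊤ φ (s.erase i) := by
  refine iSup₂_le fun l hl => ?_
  rintro _ ⟨g, -, rfl⟩
  rcases eq_or_ne l i with rfl | hli
  · have hg : LinearMap.funLeft 𝕜 E (φ l) g = (g ∘ η) ∘ φ j := by rw [hη]; rfl
    exact hg ▸ comp_mem_sumComp hj trivial
  · exact comp_mem_sumComp (Finset.mem_erase.2 ⟨hli, hl⟩) trivial

theorem sub_translate_mem_sumComp_erase {𝕜 ι V Y E F : Type*} [Ring 𝕜] [AddCommGroup E]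
    [Module 𝕜 E] [DecidableEq ι] [Add V] [Add Y] [FunLike F V Y] [AddHomClass F V Y] {φ : ι → F}
    {s : Finset ι} {f : V → E} {i : ι} {v w : V}
    (hf : f ∈ sumComp (⊤ : Submodule 𝕜 (Y → E)) (fun i => φ i) s) (hvw : φ i v = φ i w) :
    (fun x => f (x + v) - f (x + w)) ∈
      sumComp (⊤ : Submodule 𝕜 (Y → E)) (fun i => φ i) (s.erase i) := by
  obtain ⟨g, -, rfl⟩ := mem_sumComp_iff.1 hf
  refine mem_sumComp_iff.2
    ⟨fun l y => g l (y + φ l v) - g l (y + φ l w), fun _ => trivial, funext fun x => ?_⟩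
  simp only [Finset.sum_apply, Function.comp_apply, map_add, ← Finset.sum_sub_distrib]
  refine (Finset.sum_erase _ ?_).symm
  rw [hvw, sub_self]

end SumComp

section Annihilator

variable {𝕜 ι X Y E : Type*} [DivisionRing 𝕜] [AddCommGroup E] [Module 𝕜 E] {φ : ι → X → Y}
  {s : Finset ι} {f : X → E}

theorem mem_sumComp_top_iff_forall_linearCombination_eq_zero :
    f ∈ sumComp (⊤ : Submodule 𝕜 (Y → E)) φ s ↔ ∀ c : X →₀ 𝕜,
      (∀ i ∈ s, c.mapDomain (φ i) = 0) → Finsupp.linearCombination 𝕜 f c = 0 := by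
  classical
  refine ⟨fun hf c hc => ?_, fun hf => ?_⟩
  · obtain ⟨g, -, rfl⟩ := mem_sumComp_iff.1 hf
    have hg : ∀ i ∈ s, Finsupp.linearCombination 𝕜 (g i ∘ φ i) c = 0 := fun i hi => by
      rw [← Finsupp.linearCombination_mapDomain, hc i hi, map_zero]
    rw [← Finset.sum_eq_zero hg]
    simp only [Finsupp.linearCombination_apply, Finsupp.sum, Finset.sum_apply, Finset.smul_sum]
    exact Finset.sum_comm
  · let S : (X →₀ 𝕜) →ₗ[𝕜] ι → Y →₀ 𝕜 :=
      ∑ i ∈ s, LinearMap.single 𝕜 (fun _ => Y →₀ 𝕜) i ∘ₗ Finsupp.lmapDomain 𝕜 𝕜 (φ i)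
    have hS : S.ker ≤ (Finsupp.linearCombination 𝕜 f).ker := fun c hc => hf c fun i hi => by
      have := congrFun hc i
      simpa [S, Finset.sum_apply, Pi.single_apply, hi] using this
    obtain ⟨G, hG⟩ := exists_linearMap_comp_eq_of_ker_le hS
    refine mem_sumComp_iff.2
      ⟨fun i y => G (Pi.single i (Finsupp.single y 1)), fun _ => trivial, funext fun x => ?_⟩
    simpa [S] using (LinearMap.congr_fun hG (Finsupp.single x 1)).symm

theorem isClosed_sumComp_top [TopologicalSpace E] [T2Space E] [ContinuousAdd E]
    [ContinuousConstSMul 𝕜 E] : IsClosed (sumComp (⊤ : Submodule 𝕜 (Y → E)) φ s : Set (X → E)) := by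
  have h_inter : (sumComp (⊤ : Submodule 𝕜 (Y → E)) φ s : Set (X → E)) =
      ⋂ (c : X →₀ 𝕜) (_ : ∀ i ∈ s, c.mapDomain (φ i) = 0),
        {f | Finsupp.linearCombination 𝕜 f c = 0} := by
    ext f
    simp [mem_sumComp_top_iff_forall_linearCombination_eq_zero]
  rw [h_inter]
  refine isClosed_biInter fun c _ => isClosed_eq ?_ continuous_const
  exact continuous_finsetSum _ fun x _ => (continuous_apply x).const_smul (c x)

theorem integral_mem_sumComp_top {α E : Type*} [MeasurableSpace α] {μ : Measure α}
    [NormedAddCommGroup E] [NormedSpace ℝ E] {G : α → X → E}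
    (hG : ∀ a, G a ∈ sumComp (⊤ : Submodule ℝ (Y → E)) φ s)
    (hint : ∀ x, Integrable (G · x) μ) :
    (fun x => ∫ a, G a x ∂μ) ∈ sumComp (⊤ : Submodule ℝ (Y → E)) φ s := by
  refine mem_sumComp_top_iff_forall_linearCombination_eq_zero.2 fun c hc => ?_
  calc c.sum (fun x r => r • ∫ a, G a x ∂μ)
      = ∫ a, Finsupp.linearCombination ℝ (G a) c ∂μ := by
        simp only [Finsupp.sum, ← integral_smul, Finsupp.linearCombination_apply]
        exact (integral_finsetSum _ fun x _ => (hint x).smul (c x)).symm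
    _ = 0 := by
        simp [mem_sumComp_top_iff_forall_linearCombination_eq_zero.1 (hG _) c hc]

end Annihilator

section ContDiff

variable {V E : Type*} [NormedAddCommGroup V] [NormedSpace ℝ V] [NormedAddCommGroup E]
  [NormedSpace ℝ E] {n : WithTop ℕ∞}

variable (V E n) in
/-- The `C^n` functions `V → E`, as a subspace of all functions; on `V = ℝ` it is the class of
profiles to which `sumComp` is applied. -/
def contDiffSubmodule : Submodule ℝ (V → E) where
  carrier := {f | ContDiff ℝ n f}
  add_mem' := ContDiff.add
  zero_mem' := contDiff_const
  smul_mem' c _ hf := hf.const_smul c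

theorem contDiffSubmodule_anti {m : WithTop ℕ∞} (hmn : m ≤ n) :
    contDiffSubmodule V E n ≤ contDiffSubmodule V E m :=
  fun _ hf => hf.of_le hmn

theorem exists_contDiff_eq_comp_of_factorsThrough {φ : V →L[ℝ] ℝ} {f : V → E}
    (hf : ContDiff ℝ n f) (hφ : Function.FactorsThrough f φ) :
    ∃ g : ℝ → E, ContDiff ℝ n g ∧ f = g ∘ φ := by
  rcases eq_or_ne φ 0 with rfl | hne
  · exact ⟨fun _ => f 0, contDiff_const, funext fun x => hφ rfl⟩
  · obtain ⟨u, hu⟩ : ∃ u, φ u = 1 :=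
      LinearMap.surjective (fun h => hne (ContinuousLinearMap.coe_injective h)) 1
    exact ⟨fun t => f (t • u), hf.comp (contDiff_id.smul contDiff_const),
      funext fun x => hφ (by simp [hu])⟩

theorem apply_add_smul_of_fderiv_apply_eq_zero {f : V → E} (hf : Differentiable ℝ f) {v : V}
    (h : ∀ x, fderiv ℝ f x v = 0) (x : V) (t : ℝ) : f (x + t • v) = f x := by
  have hderiv : ∀ t : ℝ, HasDerivAt (fun t : ℝ => f (x + t • v)) 0 t := fun t => by
    have hline : HasDerivAt (fun t : ℝ => x + t • v) v t := by
      simpa using ((hasDerivAt_id t).smul_const v).const_add x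
    simpa only [h, Function.comp_def] using (hf (x + t • v)).hasFDerivAt.comp_hasDerivAt t hline
  simpa using is_const_of_deriv_eq_zero (fun t => (hderiv t).differentiableAt)
    (fun t => (hderiv t).deriv) t 0

theorem exists_contDiff_antideriv [CompleteSpace E] {n : ℕ∞} {g : ℝ → E} (hg : ContDiff ℝ n g) :
    ∃ G : ℝ → E, ContDiff ℝ (n + 1) G ∧ ∀ x, HasDerivAt G (g x) x := by
  have hG : ∀ x, HasDerivAt (fun x => ∫ t in (0 : ℝ)..x, g t) (g x) x :=
    fun x => (hg.continuous.integral_hasStrictDerivAt 0 x).hasDerivAt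
  refine ⟨_, contDiff_succ_iff_deriv.2 ⟨fun x => (hG x).differentiableAt, by simp, ?_⟩, hG⟩
  rwa [funext fun x => (hG x).deriv]

end ContDiff

section TranslateAverage

variable {α ι V E : Type*} [MeasurableSpace α] [TopologicalSpace α] [OpensMeasurableSpace α]
  {μ : Measure α} [IsFiniteMeasureOnCompacts μ] [TopologicalSpace V] [Add V] [ContinuousAdd V]
  [NormedAddCommGroup E] [NormedSpace ℝ E] {Φ : α → ℝ} {T T' : α → V} {f : V → E}

/-- The average of the translates of `f` by the vectors `T a`, with weight `Φ a`. For `Φ` of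
integral one, it is `f` itself when `T = 0` and a mollification of `f` when `T a = -a`. -/
noncomputable def translateAverage (μ : Measure α) (Φ : α → ℝ) (T : α → V) (f : V → E) :
    V → E :=
  fun x => ∫ a, Φ a • f (x + T a) ∂μ

theorem continuous_translateAverage (hΦ : Continuous Φ) (hΦs : HasCompactSupport Φ)
    (hT : Continuous T) (hf : Continuous f) : Continuous (translateAverage μ Φ T f) := by
  rw [← continuousOn_univ]
  refine continuousOn_integral_of_compact_support hΦs (Continuous.continuousOn ?_)
    fun x a _ ha => ?_
  · fun_prop
  · rw [image_eq_zero_of_notMem_tsupport ha, zero_smul]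

theorem translateAverage_sub_mem_sumComp_erase [DecidableEq ι] {Y F : Type*} [Add Y]
    [FunLike F V Y] [AddHomClass F V Y] {φ : ι → F} {s : Finset ι} {i : ι} (hΦ : Continuous Φ)
    (hΦs : HasCompactSupport Φ) (hT : Continuous T) (hT' : Continuous T')
    (hφ : ∀ a, φ i (T a) = φ i (T' a)) (hf : Continuous f)
    (hfs : f ∈ sumComp (⊤ : Submodule ℝ (Y → E)) (fun i => φ i) s) :
    translateAverage μ Φ T f - translateAverage μ Φ T' f ∈
      sumComp (⊤ : Submodule ℝ (Y → E)) (fun i => φ i) (s.erase i) := by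
  have h_int : ∀ {S : α → V}, Continuous S → ∀ x, Integrable (fun a => Φ a • f (x + S a)) μ :=
    fun hS x => Continuous.integrable_of_hasCompactSupport (by fun_prop) hΦs.smul_right
  have h_sub : translateAverage μ Φ T f - translateAverage μ Φ T' f =
      fun x => ∫ a, Φ a • (f (x + T a) - f (x + T' a)) ∂μ := funext fun x => by
    simp only [smul_sub]
    exact (integral_sub (h_int hT x) (h_int hT' x)).symm
  rw [h_sub]
  refine integral_mem_sumComp_top
    (fun a => Submodule.smul_mem _ (Φ a) (sub_translate_mem_sumComp_erase hfs (hφ a))) fun x => ?_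
  exact ((h_int hT x).sub (h_int hT' x)).congr (.of_forall fun a => (smul_sub _ _ _).symm)

end TranslateAverage

section Ridge

variable {ι V E : Type*} [NormedAddCommGroup V] [NormedSpace ℝ V] [NormedAddCommGroup E]
  [NormedSpace ℝ E] {φ : ι → V →L[ℝ] ℝ} {s : Finset ι} {f : V → E} {i j : ι} {n : ℕ∞}

/-- The sums `x ↦ ∑ i ∈ s, g i (φ i x)` of ridge functions with directions `φ i` and profiles
`g i ∈ P`. -/
noncomputable abbrev ridgeSums (P : Submodule ℝ (ℝ → E)) (φ : ι → V →L[ℝ] ℝ) (s : Finset ι) :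
    Submodule ℝ (V → E) :=
  sumComp P (fun i => φ i) s

theorem contDiff_of_mem_ridgeSums {n : WithTop ℕ∞}
    (hf : f ∈ ridgeSums (contDiffSubmodule ℝ E n) φ s) : ContDiff ℝ n f := by
  obtain ⟨g, hg, rfl⟩ := mem_sumComp_iff.1 hf
  exact (contDiffSubmodule V E n).sum_mem fun i _ => (hg i).comp (φ i).contDiff

theorem fderiv_apply_mem_ridgeSums_erase [DecidableEq ι] {v : V} (hv : φ i v = 0)
    (hd : Differentiable ℝ f) (hf : f ∈ ridgeSums ⊤ φ s) :
    (fun x => fderiv ℝ f x v) ∈ ridgeSums ⊤ φ (s.erase i) := by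
  refine isClosed_sumComp_top.mem_of_tendsto (b := 𝓝[≠] (0 : ℝ)) (tendsto_pi_nhds.2 fun x =>
    ((hd x).hasFDerivAt.hasLineDerivAt v).tendsto_slope_zero) (.of_forall fun t => ?_)
  have hdiff := sub_translate_mem_sumComp_erase (v := t • v) (w := 0) hf (i := i) (by simp [hv])
  simp only [add_zero] at hdiff
  exact Submodule.smul_mem _ t⁻¹ hdiff

theorem exists_mem_ridgeSums_fderiv_apply_eq [CompleteSpace E] {v : V}
    (hv : ∀ i ∈ s, φ i v ≠ 0) (hf : f ∈ ridgeSums (contDiffSubmodule ℝ E n) φ s) :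
    ∃ H ∈ ridgeSums (contDiffSubmodule ℝ E (n + 1)) φ s, ∀ x, fderiv ℝ H x v = f x := by
  obtain ⟨g, hg, rfl⟩ := mem_sumComp_iff.1 hf
  choose G hG hGg using fun i => exists_contDiff_antideriv (hg i)
  refine ⟨∑ i ∈ s, ((φ i v)⁻¹ • G i) ∘ φ i, mem_sumComp_iff.2
    ⟨_, fun i => Submodule.smul_mem _ _ (hG i), rfl⟩, fun x => ?_⟩
  have hderiv : ∀ i ∈ s, HasFDerivAt (((φ i v)⁻¹ • G i) ∘ φ i) _ x := fun i _ =>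
    (((hGg i (φ i x)).const_smul (φ i v)⁻¹).hasFDerivAt).comp x (φ i).hasFDerivAt
  rw [(HasFDerivAt.sum hderiv).fderiv]
  simp only [sum_apply, Finset.sum_apply]
  refine Finset.sum_congr rfl fun i hi => ?_
  simp [smul_inv_smul₀ (hv i hi)]

theorem mem_ridgeSums_contDiff_of_singleton {n : WithTop ℕ∞} (hf : ContDiff ℝ n f)
    (hfs : f ∈ ridgeSums ⊤ φ {i}) : f ∈ ridgeSums (contDiffSubmodule ℝ E n) φ {i} := by
  obtain ⟨F, -, hF⟩ := mem_sumComp_iff.1 hfs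
  rw [Finset.sum_singleton] at hF
  obtain ⟨g, hg, rfl⟩ := exists_contDiff_eq_comp_of_factorsThrough hf
    (φ := φ i) (fun x y hxy => by simp [hF, hxy])
  exact comp_mem_sumComp (φ := fun i => φ i) (Finset.mem_singleton_self i) hg

theorem mem_ridgeSums_contDiff_add_one_of_fderiv_apply [CompleteSpace E] [DecidableEq ι]
    {v : V} (hi : i ∈ s) (hker : (φ i).ker ≤ Submodule.span ℝ {v})
    (hv : ∀ j ∈ s.erase i, φ j v ≠ 0) (hf : ContDiff ℝ (n + 1) f)
    (h : (fun x => fderiv ℝ f x v) ∈ ridgeSums (contDiffSubmodule ℝ E n) φ (s.erase i)) :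
    f ∈ ridgeSums (contDiffSubmodule ℝ E (n + 1)) φ s := by
  obtain ⟨H, hH, hHv⟩ := exists_mem_ridgeSums_fderiv_apply_eq hv h
  have hHc := contDiff_of_mem_ridgeSums hH
  have hfHc : ContDiff ℝ (n + 1) (f - H) := hf.sub hHc
  have h_inv : ∀ x (t : ℝ), (f - H) (x + t • v) = (f - H) x :=
    apply_add_smul_of_fderiv_apply_eq_zero (hfHc.differentiable (by simp)) fun x => by
      rw [fderiv_sub (hf.differentiable (by simp) x) (hHc.differentiable (by simp) x),
        sub_apply, hHv, sub_self]
  have h_fac : Function.FactorsThrough (f - H) (φ i) := fun x y hxy => by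
    obtain ⟨t, ht⟩ := Submodule.mem_span_singleton.1
      (hker (show x - y ∈ (φ i).ker by simp [hxy]))
    rw [← h_inv y t, ht, add_sub_cancel]
  obtain ⟨g, hg, hfH⟩ := exists_contDiff_eq_comp_of_factorsThrough hfHc h_fac
  rw [← sub_add_cancel f H, hfH]
  exact Submodule.add_mem _ (comp_mem_sumComp (φ := fun i => φ i) hi hg)
    (sumComp_mono le_rfl (s.erase_subset i) hH)

theorem exists_smooth_decomposition [FiniteDimensional ℝ V] [CompleteSpace E]
    [DecidableEq ι] {u : V} (hi : φ i u = 0) (hj : φ j u = 1) (hf : Continuous f)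
    (hfs : f ∈ ridgeSums ⊤ φ s) :
    ∃ f₁ ∈ ridgeSums ⊤ φ (s.erase i), ∃ f₂ ∈ ridgeSums ⊤ φ (s.erase j),
      Continuous f₁ ∧ Continuous f₂ ∧ ContDiff ℝ ∞ (f - f₁ - f₂) := by
  borelize V
  let b : ContDiffBump (0 : V) := default
  let Φ : V → ℝ := b.normed .addHaar
  have hΦ : Continuous Φ := b.continuous_normed
  have hΦs : HasCompactSupport Φ := b.hasCompactSupport_normed
  let A : (V → V) → V → E := fun T => translateAverage .addHaar Φ T f
  have hA_cont : ∀ {T}, Continuous T → Continuous (A T) :=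
    fun hT => continuous_translateAverage hΦ hΦs hT hf
  have hA_const : A (fun _ => 0) = f := funext fun x => by
    simp [A, translateAverage, integral_smul_const, Φ, b.integral_normed]
  have hA_conv : ContDiff ℝ ∞ (A Neg.neg) := by
    have := hΦs.contDiff_convolution_left (n := ⊤) (.lsmul ℝ ℝ) b.contDiff_normed
      (hf.locallyIntegrable (μ := .addHaar))
    convert this using 1
    ext x
    simp [A, translateAverage, convolution_def, sub_eq_add_neg]
  -- `T` agrees with `0` under `φ i` and with `-id` under `φ j`.
  let T : V → V := fun x => -(φ j x • u)
  have hT : Continuous T := by fun_prop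
  refine ⟨A (fun _ => 0) - A T, ?_, A T - A Neg.neg, ?_, ?_, ?_, ?_⟩
  · exact translateAverage_sub_mem_sumComp_erase hΦ hΦs continuous_const hT
      (by simp [T, hi]) hf hfs
  · exact translateAverage_sub_mem_sumComp_erase hΦ hΦs hT continuous_neg (by simp [T, hj]) hf hfs
  · exact (hA_cont continuous_const).sub (hA_cont hT)
  · exact (hA_cont hT).sub (hA_cont continuous_neg)
  · rwa [hA_const, sub_sub_cancel, sub_sub_cancel]

theorem mem_ridgeSums_contDiff_add_one_of_erase [CompleteSpace E] [FiniteDimensional ℝ V]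
    [DecidableEq ι] (hV : finrank ℝ V ≤ 2)
    (hφ : (s : Set ι).Pairwise fun i j => ¬ (φ i).ker ≤ (φ j).ker)
    (hi : i ∈ s) (hj : j ∈ s) (hij : i ≠ j)
    (ih : ∀ g : V → E, ContDiff ℝ n g → g ∈ ridgeSums ⊤ φ (s.erase i) →
      g ∈ ridgeSums (contDiffSubmodule ℝ E n) φ (s.erase i))
    (hf : ContDiff ℝ (n + 1) f) (hfs : f ∈ ridgeSums ⊤ φ s) :
    f ∈ ridgeSums (contDiffSubmodule ℝ E (n + 1)) φ s := by
  have hφi : (φ i).toLinearMap ≠ 0 := fun h => hφ hj hi hij.symm (by simp [h])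
  obtain ⟨v, hv⟩ := exists_ker_eq_span_singleton hV hφi
  have hφv : ∀ l ∈ s.erase i, φ l v ≠ 0 := fun l hl hlv => by
    obtain ⟨hli, hl⟩ := Finset.mem_erase.1 hl
    exact hφ hi hl hli.symm (hv.le.trans ((Submodule.span_singleton_le_iff_mem _ _).2 hlv))
  have hvi : φ i v = 0 := hv.ge (Submodule.mem_span_singleton_self v)
  refine mem_ridgeSums_contDiff_add_one_of_fderiv_apply hi hv.le hφv hf (ih _ ?_
    (fderiv_apply_mem_ridgeSums_erase hvi (hf.differentiable (by simp)) hfs))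
  exact (hf.fderiv_right le_rfl).clm_apply contDiff_const

theorem mem_ridgeSums_contDiff_zero_of_erase [CompleteSpace E] [FiniteDimensional ℝ V]
    [DecidableEq ι] (hV : finrank ℝ V ≤ 2)
    (hφ : (s : Set ι).Pairwise fun i j => ¬ (φ i).ker ≤ (φ j).ker)
    (hi : i ∈ s) (hj : j ∈ s) (hij : i ≠ j)
    (ih : ∀ l ∈ s, ∀ g : V → E, Continuous g → g ∈ ridgeSums ⊤ φ (s.erase l) →
      g ∈ ridgeSums (contDiffSubmodule ℝ E 0) φ (s.erase l))
    (hf : Continuous f) (hfs : f ∈ ridgeSums ⊤ φ s) :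
    f ∈ ridgeSums (contDiffSubmodule ℝ E 0) φ s := by
  obtain ⟨u, hiu, hju⟩ := exists_apply_eq_zero_and_apply_eq_one (hφ hi hj hij)
  obtain ⟨f₁, hf₁s, f₂, hf₂s, hf₁, hf₂, h_smooth⟩ := exists_smooth_decomposition hiu hju hf hfs
  have h_erase : ∀ {P : Submodule ℝ (ℝ → E)} l, ridgeSums P φ (s.erase l) ≤ ridgeSums P φ s :=
    fun l => sumComp_mono le_rfl (s.erase_subset l)
  have h_smooth_mem : f - f₁ - f₂ ∈ ridgeSums (contDiffSubmodule ℝ E (0 + 1)) φ s :=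
    mem_ridgeSums_contDiff_add_one_of_erase (n := 0) hV hφ hi hj hij
      (fun g hg => ih i hi g hg.continuous) (h_smooth.of_le (by simp))
      (Submodule.sub_mem _ (Submodule.sub_mem _ hfs (h_erase i hf₁s)) (h_erase j hf₂s))
  rw [show f = f - f₁ - f₂ + f₂ + f₁ by abel]
  refine Submodule.add_mem _ (Submodule.add_mem _ ?_ ?_) ?_
  · exact sumComp_mono (contDiffSubmodule_anti (by simp)) subset_rfl h_smooth_mem
  · exact h_erase j (ih j hj f₂ hf₂ hf₂s)
  · exact h_erase i (ih i hi f₁ hf₁ hf₁s)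

theorem mem_ridgeSums_contDiff_of_pairwise [CompleteSpace E] [FiniteDimensional ℝ V]
    [DecidableEq ι] (hV : finrank ℝ V ≤ 2)
    (hφ : (s : Set ι).Pairwise fun i j => ¬ (φ i).ker ≤ (φ j).ker)
    (ih : ∀ i ∈ s, ∀ (m : ℕ∞) (g : V → E), ContDiff ℝ m g → g ∈ ridgeSums ⊤ φ (s.erase i) →
      g ∈ ridgeSums (contDiffSubmodule ℝ E m) φ (s.erase i))
    (hf : ContDiff ℝ n f) (hfs : f ∈ ridgeSums ⊤ φ s) :
    f ∈ ridgeSums (contDiffSubmodule ℝ E n) φ s := by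
  rcases s.eq_empty_or_nonempty with rfl | hs
  · simpa [ridgeSums, sumComp] using hfs
  obtain ⟨i, rfl⟩ | ⟨i, hi, j, hj, hij⟩ := hs.exists_eq_singleton_or_nontrivial
  · exact mem_ridgeSums_contDiff_of_singleton hf hfs
  obtain rfl | ⟨m, rfl⟩ : n = 0 ∨ ∃ m : ℕ∞, n = m + 1 := by
    rw [or_iff_not_imp_left]
    exact fun hn => ⟨n - 1, (tsub_add_cancel_of_le (Order.one_le_iff_ne_zero.2 hn)).symm⟩
  · exact mem_ridgeSums_contDiff_zero_of_erase hV hφ hi hj hij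
      (fun l hl g hg => ih l hl 0 g (contDiff_zero.2 hg)) hf.continuous hfs
  · exact mem_ridgeSums_contDiff_add_one_of_erase hV hφ hi hj hij (ih i hi m) hf hfs

theorem mem_ridgeSums_contDiff [CompleteSpace E] [FiniteDimensional ℝ V]
    (hV : finrank ℝ V ≤ 2) (hf : ContDiff ℝ n f) (hfs : f ∈ ridgeSums ⊤ φ s) :
    f ∈ ridgeSums (contDiffSubmodule ℝ E n) φ s := by
  classical
  induction s using Finset.strongInduction generalizing n f with
  | H s ih =>
  have ih_erase : ∀ i ∈ s, ∀ (m : ℕ∞) (g : V → E), ContDiff ℝ m g →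
      g ∈ ridgeSums ⊤ φ (s.erase i) → g ∈ ridgeSums (contDiffSubmodule ℝ E m) φ (s.erase i) :=
    fun i hi m g hg => ih _ (Finset.erase_ssubset hi) hg
  by_cases hφ : (s : Set ι).Pairwise fun i j => ¬ (φ i).ker ≤ (φ j).ker
  · exact mem_ridgeSums_contDiff_of_pairwise hV hφ ih_erase hf hfs
  · simp only [Set.Pairwise] at hφ
    push Not at hφ
    obtain ⟨j, hj, i, hi, hji, h_ker⟩ := hφ
    obtain ⟨η, hη⟩ := exists_linearMap_comp_eq_of_ker_le h_ker
    have h_comp : (φ i : V → ℝ) = η ∘ φ j := (congrArg DFunLike.coe hη).symm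
    exact sumComp_mono le_rfl (s.erase_subset i) (ih_erase i hi n f hf
      (sumComp_top_le_erase_of_comp_eq (Finset.mem_erase.2 ⟨hji, hj⟩) h_comp hfs))

end Ridge

theorem stmt12_general {ι V E : Type*} [Fintype ι] [NormedAddCommGroup V] [NormedSpace ℝ V]
    [FiniteDimensional ℝ V] (hV : finrank ℝ V ≤ 2) [NormedAddCommGroup E] [NormedSpace ℝ E]
    [CompleteSpace E] (n : ℕ∞) (φ : ι → V →L[ℝ] ℝ) (f : V → E) (hf : ContDiff ℝ n f)
    (F : ι → ℝ → E) (hrepr : ∀ x, f x = ∑ i, F i (φ i x)) :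
    ∃ g : ι → ℝ → E, (∀ i, ContDiff ℝ n (g i)) ∧ ∀ x, f x = ∑ i, g i (φ i x) := by
  have hfs : f ∈ ridgeSums ⊤ φ Finset.univ :=
    mem_sumComp_iff.2 ⟨F, fun _ => trivial, funext fun x => by simp [hrepr]⟩
  obtain ⟨g, hg, h_eq⟩ := mem_sumComp_iff.1 (mem_ridgeSums_contDiff hV hf hfs)
  exact ⟨g, hg, fun x => by simp [h_eq]⟩

/-- If `f ∈ Cˢ(ℝ²)` is a sum of arbitrarily behaved ridge functions with
pairwise linearly independent directions `(a₁,b₁),...,(a_k,b_k)` in `ℝ²`, then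
it is a sum of `Cˢ` ridge functions with the same directions. -/
theorem stmt12 {k : ℕ} (s : ℕ) (a b : Fin k → ℝ)
    (hind : ∀ i j : Fin k, i ≠ j →
      LinearIndependent ℝ ![((a i, b i) : ℝ × ℝ), ((a j, b j) : ℝ × ℝ)])
    (f : ℝ × ℝ → ℝ) (hf : ContDiff ℝ (s : ℕ∞) f)
    (F : Fin k → ℝ → ℝ)
    (hrepr : ∀ x y : ℝ, f (x, y) = ∑ i, F i (a i * x + b i * y)) :
    ∃ g : Fin k → ℝ → ℝ, (∀ i, ContDiff ℝ (s : ℕ∞) (g i)) ∧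
      ∀ x y : ℝ, f (x, y) = ∑ i, g i (a i * x + b i * y) := by
  simpa using stmt12_general (by simp) s
    (fun i => a i • ContinuousLinearMap.fst ℝ ℝ ℝ + b i • ContinuousLinearMap.snd ℝ ℝ ℝ)
    f hf F (by simpa using hrepr)
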